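/- (Lemma 4.1) Fix an integer d ≥ 1, m > 0 and x ∈ ℝ^d. The family of probability measures {W_{x,a} : 0 < a < 1} on Γ̃(x) is tight: for every η > 0 there exists a compact set K ⊆ Γ̃(x) such that W_{x,a}(Γ̃(x) ∖ K) < η for all 0 < a < 1. -/

import Mathlib

open MeasureTheory Filter Topology Real Set
open scoped RealInnerProductSpace ENNReal unitInterval

noncomputable section

/-- `ℝ^d` as a Euclidean space. -/
abbrev Ed (d : ℕ) := EuclideanSpace ℝ (Fin d)

/-- The space of continuous paths `[0,1] → ℝ^d`, with the uniform metric. -/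
abbrev PathSp (d : ℕ) := C(unitInterval, Ed d)

instance (d : ℕ) : MeasurableSpace (PathSp d) := borel _
instance (d : ℕ) : BorelSpace (PathSp d) := ⟨rfl⟩

/-- Evaluation of a path at a real time, clamped to `[0,1]`. -/
def evalAt {d : ℕ} (ω : PathSp d) (t : ℝ) : Ed d := ω (Set.projIcc 0 1 zero_le_one t)

/-- `Ω(x)`: continuous paths starting at `x`. -/
abbrev Omega1 {d : ℕ} (x : Ed d) := {ω : PathSp d // ω 0 = x}

/-- `Ω(x,y)`: continuous paths from `x` to `y`. -/
abbrev Omega2 {d : ℕ} (x y : Ed d) := {ω : PathSp d // ω 0 = x ∧ ω 1 = y}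

/-- clamp a real number to `[0,1]`. -/
def clamp01 (r : ℝ) : ℝ := min 1 (max 0 r)

lemma clamp01_of_nonpos {r : ℝ} (h : r ≤ 0) : clamp01 r = 0 := by
  rw [clamp01, max_eq_left h, min_eq_right zero_le_one]

lemma clamp01_of_one_le {r : ℝ} (h : 1 ≤ r) : clamp01 r = 1 := by
  rw [clamp01, max_eq_right (zero_le_one.trans h), min_eq_left h]

lemma clamp01_continuous : Continuous clamp01 :=
  continuous_const.min (continuous_const.max continuous_id)

/-- The piecewise linear path starting at `x` with `N` steps given by the increments `v i`,
the `i`-th step being linearly parametrized by `[i/N, (i+1)/N]`. -/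
def pwLinE {d : ℕ} (x : Ed d) (N : ℕ) (v : Fin N → Ed d) : PathSp d :=
  ⟨fun t => x + ∑ i : Fin N, clamp01 ((N : ℝ) * (t : ℝ) - ((i : ℕ) : ℝ)) • v i, by
    refine continuous_const.add (continuous_finset_sum _ fun i _ => ?_)
    exact ((clamp01_continuous.comp
      ((continuous_const.mul continuous_subtype_val).sub continuous_const)).smul
      continuous_const)⟩

lemma pwLinE_zero {d : ℕ} (x : Ed d) (N : ℕ) (v : Fin N → Ed d) :
    pwLinE x N v 0 = x := by
  show x + ∑ i : Fin N, clamp01 ((N : ℝ) * ((0 : unitInterval) : ℝ) - ((i : ℕ) : ℝ)) • v i = x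
  have h : ∀ i : Fin N, clamp01 ((N : ℝ) * ((0 : unitInterval) : ℝ) - ((i : ℕ) : ℝ)) = 0 := by
    intro i
    apply clamp01_of_nonpos
    have h0 : ((0 : unitInterval) : ℝ) = 0 := rfl
    rw [h0, mul_zero, zero_sub]
    exact neg_nonpos.mpr (Nat.cast_nonneg (i : ℕ))
  simp only [h, zero_smul, Finset.sum_const_zero, add_zero]

lemma pwLinE_one {d : ℕ} (x : Ed d) (N : ℕ) (v : Fin N → Ed d) :
    pwLinE x N v 1 = x + ∑ i : Fin N, v i := by
  show x + ∑ i : Fin N, clamp01 ((N : ℝ) * ((1 : unitInterval) : ℝ) - ((i : ℕ) : ℝ)) • v i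
      = x + ∑ i : Fin N, v i
  have h : ∀ i : Fin N, clamp01 ((N : ℝ) * ((1 : unitInterval) : ℝ) - ((i : ℕ) : ℝ)) = 1 := by
    intro i
    apply clamp01_of_one_le
    have h1 : ((1 : unitInterval) : ℝ) = 1 := rfl
    have h2 : ((i : ℕ) : ℝ) + 1 ≤ (N : ℝ) := by
      exact_mod_cast Nat.succ_le_of_lt i.isLt
    rw [h1, mul_one]; linarith
  simp only [h, one_smul]

/-- Piecewise linear element of `Ω(x)` with increments `v`. -/
def pwLin1 {d : ℕ} (x : Ed d) (N : ℕ) (v : Fin N → Ed d) : Omega1 x :=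
  ⟨pwLinE x N v, pwLinE_zero x N v⟩

/-- Piecewise linear element of `Ω(x,y)` with increments `v` summing to `y - x`. -/
def pwLin2 {d : ℕ} (x y : Ed d) (N : ℕ) (v : Fin N → Ed d)
    (h : x + ∑ i : Fin N, v i = y) : Omega2 x y :=
  ⟨pwLinE x N v, pwLinE_zero x N v, by rw [pwLinE_one, h]⟩

/-- the point preceding `x_i` in the list `x, x_1, …, x_N`. -/
def prevPt {d : ℕ} (x : Ed d) {N : ℕ} (xs : Fin N → Ed d) (i : Fin N) : Ed d :=
  if (i : ℕ) = 0 then x else xs ⟨(i : ℕ) - 1, lt_of_le_of_lt (Nat.pred_le _) i.isLt⟩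

/-- The discrete measure `W_{x,a,N}`, i.e. the measure
`∏_{i=1}^N (2πa²)^{-d/2} exp(-|x_i - x_{i-1}|²/(2a²)) dx_1 … dx_N` (with `x_0 = x`)
on `N`-step piecewise linear paths, placed on `{a²N} × Ω(x) ⊆ ℝ × Ω(x)`.
For `N = 0` this is the Dirac measure at `(0, constant path at x)`. -/
def WxaN {d : ℕ} (x : Ed d) (a : ℝ) (N : ℕ) : Measure (ℝ × Omega1 x) :=
  Measure.map
    (fun xs : Fin N → Ed d =>
      ((a ^ 2 * N : ℝ), pwLin1 x N fun i => xs i - prevPt x xs i))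
    (volume.withDensity fun xs : Fin N → Ed d =>
      ENNReal.ofReal (∏ i : Fin N,
        (2 * π * a ^ 2) ^ (-(d : ℝ) / 2) *
          Real.exp (-‖xs i - prevPt x xs i‖ ^ 2 / (2 * a ^ 2))))

/-- The approximating probability measure
`W_{x,a} = (1 - e^{-m²a²/2}) Σ_{N=0}^∞ e^{-m²a²N/2} W_{x,a,N}`. -/
def Wxa {d : ℕ} (x : Ed d) (m a : ℝ) : Measure (ℝ × Omega1 x) :=
  ENNReal.ofReal (1 - Real.exp (-m ^ 2 * a ^ 2 / 2)) •
    Measure.sum fun N : ℕ =>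
      ENNReal.ofReal (Real.exp (-m ^ 2 * a ^ 2 * N / 2)) • WxaN x a N

/-- The lattice step of length `a` in direction `p.1`, forwards or backwards
according to `p.2`. -/
def stepVec {d : ℕ} (a : ℝ) (p : Fin d × Bool) : Ed d :=
  (if p.2 then a else -a) • EuclideanSpace.single p.1 (1 : ℝ)

/-- The normalized counting measure `V'_{x,a,N}` giving mass `(2d)^{-N}` to each
(piecewise linearly parametrized) `N`-step nearest-neighbour lattice path in `x + aℤ^d`
starting at `x`.  For `N = 0` it is the Dirac measure at the constant path. -/
def VxaN {d : ℕ} (x : Ed d) (a : ℝ) (N : ℕ) : Measure (Omega1 x) :=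
  Measure.sum fun s : Fin N → Fin d × Bool =>
    (((2 * d : ℕ) : ℝ≥0∞) ^ N)⁻¹ •
      Measure.dirac (pwLin1 x N fun i => stepVec a (s i))

/-- The approximating probability measure
`V'_{x,a} = (1 - e^{-m²a²/(2d)}) Σ_{N=0}^∞ e^{-m²a²N/(2d)} V'_{x,a,N}`. -/
def Vxa {d : ℕ} (x : Ed d) (m a : ℝ) : Measure (Omega1 x) :=
  ENNReal.ofReal (1 - Real.exp (-m ^ 2 * a ^ 2 / (2 * d))) •
    Measure.sum fun N : ℕ =>
      ENNReal.ofReal (Real.exp (-m ^ 2 * a ^ 2 * N / (2 * d))) • VxaN x a N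

/-- `Wt` is the family of Wiener measures `(W_x^t)_{t>0}` on `Ω(x)`:
each `W_x^t` is a Borel probability measure, characterized by the characteristic
functions of its finite dimensional distributions
`∫ exp(i Σ_j ξ_j·ω(t_j)) dW_x^t = exp(-(t/2) Σ_j (t_j - t_{j-1}) |ξ_j + ⋯ + ξ_n|²
+ i x·(ξ_1 + ⋯ + ξ_n))` for all `0 = t_0 < t_1 < ⋯ < t_n ≤ 1`. -/
def IsWienerFamily {d : ℕ} (x : Ed d) (Wt : ℝ → Measure (Omega1 x)) : Prop :=
  ∀ t : ℝ, 0 < t → (IsProbabilityMeasure (Wt t) ∧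
    ∀ (n : ℕ) (ts : ℕ → ℝ), ts 0 = 0 → (∀ i < n, ts i < ts (i + 1)) → ts n ≤ 1 →
      ∀ ξ : Fin n → Ed d,
        (∫ ω : Omega1 x, Complex.exp (Complex.I *
            ((∑ i : Fin n, ⟪ξ i, evalAt ω.1 (ts ((i : ℕ) + 1))⟫ : ℝ) : ℂ)) ∂(Wt t))
          = Complex.exp
              (((-(t / 2) * ∑ i : Fin n,
                  (ts ((i : ℕ) + 1) - ts (i : ℕ)) * ‖∑ j ∈ Finset.Ici i, ξ j‖ ^ 2 : ℝ) : ℂ)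
                + Complex.I * ((⟪∑ j, ξ j, x⟫ : ℝ) : ℂ)))


section Compactness

variable {E : Type*} [PseudoMetricSpace E]

/-- A function whose increments over the `n`-th dyadic grid are at most `b n` is approximated on
that grid up to the tail of `∑ b`. -/
lemma dist_dyadic_floor_le {f : ℝ → E} (hf : Continuous f) {b : ℕ → ℝ} (hb : Summable b)
    (hb0 : ∀ n, 0 ≤ b n)
    (h : ∀ n k : ℕ, dist (f ((k : ℝ) / 2 ^ n)) (f (((k : ℝ) + 1) / 2 ^ n)) ≤ b n)
    {t : ℝ} (ht : 0 ≤ t) (n : ℕ) :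
    dist (f ((⌊t * 2 ^ n⌋₊ : ℝ) / 2 ^ n)) (f t) ≤ ∑' k, b (k + (n + 1)) := by
  have hlim : Tendsto (fun n : ℕ => f ((⌊t * 2 ^ n⌋₊ : ℝ) / 2 ^ n)) atTop (𝓝 (f t)) :=
    (hf.tendsto t).comp ((tendsto_nat_floor_mul_div_atTop ht).comp
      (tendsto_pow_atTop_atTop_of_one_lt (one_lt_two : (1 : ℝ) < 2)))
  have hstep : ∀ n : ℕ, dist (f ((⌊t * 2 ^ n⌋₊ : ℝ) / 2 ^ n))
      (f ((⌊t * 2 ^ n.succ⌋₊ : ℝ) / 2 ^ n.succ)) ≤ b (n + 1) := by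
    intro n
    set k := ⌊t * 2 ^ n⌋₊ with hk
    have hk1 : (k : ℝ) ≤ t * 2 ^ n := Nat.floor_le (by positivity)
    have hk2 : t * 2 ^ n < k + 1 := Nat.lt_floor_add_one _
    have hgrid : (k : ℝ) / 2 ^ n = ((2 * k : ℕ) : ℝ) / 2 ^ (n + 1) := by
      push_cast
      rw [pow_succ]
      field_simp
    have hcase : ⌊t * 2 ^ n.succ⌋₊ = 2 * k ∨ ⌊t * 2 ^ n.succ⌋₊ = 2 * k + 1 := by
      have h1 : 2 * k ≤ ⌊t * 2 ^ n.succ⌋₊ := by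
        apply Nat.le_floor
        push_cast
        rw [pow_succ]
        linarith
      have h2 : ⌊t * 2 ^ n.succ⌋₊ < 2 * k + 2 := by
        rw [Nat.floor_lt (by positivity)]
        push_cast
        rw [pow_succ]
        linarith
      omega
    rcases hcase with hc | hc
    · rw [hc, hgrid, Nat.succ_eq_add_one, dist_self]
      exact hb0 _
    · rw [hc, hgrid]
      have := h (n + 1) (2 * k)
      simpa using this
  have := dist_le_tsum_of_dist_le_of_tendsto (fun n => b (n + 1)) hstep
    ((summable_nat_add_iff 1).2 hb) hlim n
  refine this.trans_eq (tsum_congr fun k => ?_)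
  congr 1
  ring

/-- Bounds on dyadic increments yield a modulus of continuity. -/
lemma dist_le_of_dyadic_increments {f : ℝ → E} (hf : Continuous f) {b : ℕ → ℝ}
    (hb : Summable b) (hb0 : ∀ n, 0 ≤ b n)
    (h : ∀ n k : ℕ, dist (f ((k : ℝ) / 2 ^ n)) (f (((k : ℝ) + 1) / 2 ^ n)) ≤ b n)
    {s t : ℝ} (hs : 0 ≤ s) (hst : s ≤ t) (n : ℕ) (hn : (t - s) * 2 ^ n ≤ 1) :
    dist (f s) (f t) ≤ 2 * ∑' k, b (k + (n + 1)) + b n := by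
  have h1 := dist_dyadic_floor_le hf hb hb0 h hs n
  have h2 := dist_dyadic_floor_le hf hb hb0 h (hs.trans hst) n
  have h3 : dist (f ((⌊s * 2 ^ n⌋₊ : ℝ) / 2 ^ n)) (f ((⌊t * 2 ^ n⌋₊ : ℝ) / 2 ^ n)) ≤ b n := by
    have hle : ⌊s * 2 ^ n⌋₊ ≤ ⌊t * 2 ^ n⌋₊ := by gcongr
    have hlt : ⌊t * 2 ^ n⌋₊ < ⌊s * 2 ^ n⌋₊ + 2 := by
      rw [Nat.floor_lt (mul_nonneg (hs.trans hst) (by positivity))]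
      push_cast
      have := Nat.lt_floor_add_one (s * 2 ^ n)
      linarith
    have hcase : ⌊t * 2 ^ n⌋₊ = ⌊s * 2 ^ n⌋₊ ∨ ⌊t * 2 ^ n⌋₊ = ⌊s * 2 ^ n⌋₊ + 1 := by omega
    rcases hcase with hc | hc
    · rw [hc, dist_self]
      exact hb0 n
    · rw [hc]
      simpa using h n ⌊s * 2 ^ n⌋₊
  have h4 := dist_triangle4 (f s) (f ((⌊s * 2 ^ n⌋₊ : ℝ) / 2 ^ n))
    (f ((⌊t * 2 ^ n⌋₊ : ℝ) / 2 ^ n)) (f t)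
  rw [dist_comm] at h1
  linarith

lemma continuous_evalAt_right {d : ℕ} (ω : PathSp d) : Continuous (evalAt ω) :=
  ω.continuous.comp continuous_projIcc

lemma continuous_evalAt_left {d : ℕ} (t : ℝ) : Continuous fun ω : PathSp d => evalAt ω t :=
  continuous_eval_const _

/-- Paths from `x` whose increments over the `n`-th dyadic grid are at most `b n`. -/
def dyadicPaths {d : ℕ} (x : Ed d) (b : ℕ → ℝ) : Set (Omega1 x) :=
  {ω | ∀ n k : ℕ,
    dist (evalAt ω.1 ((k : ℝ) / 2 ^ n)) (evalAt ω.1 (((k : ℝ) + 1) / 2 ^ n)) ≤ b n}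

lemma isClosed_dyadicPaths {d : ℕ} (x : Ed d) (b : ℕ → ℝ) : IsClosed (dyadicPaths x b) := by
  simp only [dyadicPaths, ofPred_forall]
  refine isClosed_iInter fun n => isClosed_iInter fun k => isClosed_le ?_ continuous_const
  exact ((continuous_evalAt_left _).comp continuous_subtype_val).dist
    ((continuous_evalAt_left _).comp continuous_subtype_val)

lemma dist_le_of_mem_dyadicPaths {d : ℕ} {x : Ed d} {b : ℕ → ℝ} (hb : Summable b)
    (hb0 : ∀ n, 0 ≤ b n) {ω : Omega1 x} (hω : ω ∈ dyadicPaths x b) (s t : unitInterval) (n : ℕ)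
    (hn : dist s t * 2 ^ n ≤ 1) :
    dist (ω.1 s) (ω.1 t) ≤ 2 * ∑' k, b (k + (n + 1)) + b n := by
  wlog hst : s ≤ t generalizing s t
  · rw [dist_comm]
    exact this t s (by rwa [dist_comm]) (le_of_not_ge hst)
  have hst' : (s : ℝ) ≤ t := hst
  have := dist_le_of_dyadic_increments (continuous_evalAt_right ω.1) hb hb0 hω s.2.1 hst' n
    (by rwa [Subtype.dist_eq, dist_comm, Real.dist_eq, abs_of_nonneg (sub_nonneg.2 hst')] at hn)
  simpa [evalAt] using this

lemma isCompact_dyadicPaths {d : ℕ} (x : Ed d) {b : ℕ → ℝ} (hb : Summable b)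
    (hb0 : ∀ n, 0 ≤ b n) : IsCompact (dyadicPaths x b) := by
  have hstart : IsClosed {ω : PathSp d | ω 0 = x} :=
    isClosed_eq (continuous_eval_const _) continuous_const
  have hemb : IsClosedEmbedding (Subtype.val : Omega1 x → PathSp d) :=
    hstart.isClosedEmbedding_subtypeVal
  rw [hemb.isEmbedding.isCompact_iff]
  set S := Subtype.val '' dyadicPaths x b with hS
  have hSclosed : IsClosed S := hemb.isClosedMap _ (isClosed_dyadicPaths x b)
  let e := ContinuousMap.isometryEquivBoundedOfCompact unitInterval (Ed d)
  rw [← e.toHomeomorph.isCompact_image]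
  have hmod : ∀ ω ∈ S, ∀ s t : unitInterval, ∀ n : ℕ, dist s t * 2 ^ n ≤ 1 →
      dist (ω s) (ω t) ≤ 2 * ∑' k, b (k + (n + 1)) + b n := by
    rintro _ ⟨ω, hω, rfl⟩ s t n hn
    exact dist_le_of_mem_dyadicPaths hb hb0 hω s t n hn
  refine BoundedContinuousFunction.arzela_ascoli₂
    (Metric.closedBall x (2 * ∑' k, b (k + (0 + 1)) + b 0)) (isCompact_closedBall _ _) _
    (e.toHomeomorph.isClosedMap _ hSclosed) ?_ ?_
  · rintro _ t ⟨ω, hω, rfl⟩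
    have h0 : ω 0 = x := by
      obtain ⟨ω', -, rfl⟩ := hω
      exact ω'.2
    have := hmod ω hω t 0 0 (by
      rw [pow_zero, mul_one, Subtype.dist_eq, Real.dist_eq]
      simpa [abs_of_nonneg t.2.1] using t.2.2)
    rw [h0] at this
    exact this
  · have hlim : Tendsto (fun n : ℕ => 2 * ∑' k, b (k + (n + 1)) + b n) atTop (𝓝 0) := by
      have h1 := ((tendsto_sum_nat_add b).comp (tendsto_add_atTop_nat 1)).const_mul 2
      simpa using h1.add hb.tendsto_atTop_zero
    refine UniformEquicontinuous.equicontinuous (Metric.uniformEquicontinuous_iff.2 ?_)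
    intro ε hε
    obtain ⟨n, hn⟩ := (hlim.eventually_lt_const hε).exists
    refine ⟨(2 ^ n)⁻¹, by positivity, fun s t hst => ?_⟩
    rintro ⟨_, ω, hω, rfl⟩
    refine (hmod ω hω s t n ?_).trans_lt hn
    have := mul_le_mul_of_nonneg_right hst.le (show (0 : ℝ) ≤ 2 ^ n by positivity)
    rwa [inv_mul_cancel₀ (by positivity)] at this

end Compactness

section Increments

variable {d : ℕ}

/-- The increments of the sequence `x, xs 0, xs 1, …`. -/
def pathIncrements (x : Ed d) {N : ℕ} (xs : Fin N → Ed d) (i : Fin N) : Ed d :=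
  xs i - prevPt x xs i

lemma measurable_pathIncrements (x : Ed d) (N : ℕ) :
    Measurable (pathIncrements x : (Fin N → Ed d) → Fin N → Ed d) := by
  refine measurable_pi_lambda _ fun i => (measurable_pi_apply i).sub ?_
  unfold prevPt
  split_ifs
  · exact measurable_const
  · exact measurable_pi_apply _

lemma pathIncrements_cons (x y : Ed d) {N : ℕ} (ys : Fin N → Ed d) :
    pathIncrements x (Fin.cons y ys : Fin (N + 1) → Ed d)
      = Fin.cons (y - x) (pathIncrements y ys) := by
  funext i
  refine Fin.cases ?_ (fun j => ?_) i
  · simp [pathIncrements, prevPt]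
  · simp only [pathIncrements, prevPt, Fin.cons_succ, Fin.val_succ, Nat.succ_ne_zero, if_false]
    congr 1
    obtain ⟨j, hj⟩ := j
    cases j with
    | zero => rfl
    | succ k => rfl

lemma lintegral_fin_cons {N : ℕ} {F : (Fin (N + 1) → Ed d) → ℝ≥0∞} (hF : Measurable F) :
    ∫⁻ xs, F xs = ∫⁻ y : Ed d, ∫⁻ ys : Fin N → Ed d, F (Fin.cons y ys) := by
  have hmp := (volume_preserving_piFinSuccAbove (fun _ : Fin (N + 1) => Ed d) 0).symm
  rw [← hmp.lintegral_comp hF, Measure.volume_eq_prod, lintegral_prod _ (by fun_prop)]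
  simp [MeasurableEquiv.piFinSuccAbove, Fin.insertNthEquiv]

/-- Passing from the points of a path to its increments preserves Lebesgue measure. -/
lemma lintegral_pathIncrements {N : ℕ} (x : Ed d) {F : (Fin N → Ed d) → ℝ≥0∞}
    (hF : Measurable F) : ∫⁻ xs, F (pathIncrements x xs) = ∫⁻ v, F v := by
  induction N generalizing x with
  | zero =>
    congr 1
    funext xs
    rw [Subsingleton.elim (pathIncrements x xs) xs]
  | succ N ih =>
    have hcomp : Measurable fun xs : Fin (N + 1) → Ed d => F (pathIncrements x xs) :=
      hF.comp (measurable_pathIncrements x _)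
    rw [lintegral_fin_cons hcomp, lintegral_fin_cons hF]
    simp only [pathIncrements_cons]
    have hcons : ∀ y : Ed d, Measurable fun v : Fin N → Ed d => F (Fin.cons (y - x) v) :=
      fun y => hF.comp (measurable_pi_lambda _ fun i => by
        refine Fin.cases ?_ (fun j => ?_) i
        · simp
        · simpa using measurable_pi_apply j)
    simp_rw [fun y => ih y (hcons y)]
    exact lintegral_sub_right_eq_self (fun w : Ed d => ∫⁻ v : Fin N → Ed d, F (Fin.cons w v)) x

/-- The density of the centred Gaussian on `ℝ^d` with covariance `a² I`. -/
def gaussDensity (d : ℕ) (a : ℝ) (w : Ed d) : ℝ :=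
  (2 * π * a ^ 2) ^ (-(d : ℝ) / 2) * Real.exp (-‖w‖ ^ 2 / (2 * a ^ 2))

lemma gaussDensity_nonneg (a : ℝ) (w : Ed d) : 0 ≤ gaussDensity d a w := by
  unfold gaussDensity
  positivity

lemma continuous_gaussDensity (a : ℝ) : Continuous (gaussDensity d a) := by
  unfold gaussDensity
  fun_prop

/-- The law of `N` independent Gaussian increments. -/
def gaussIncrements (d : ℕ) (a : ℝ) (N : ℕ) : Measure (Fin N → Ed d) :=
  volume.withDensity fun v => ENNReal.ofReal (∏ i, gaussDensity d a (v i))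

lemma measurable_prod_gaussDensity (a : ℝ) (N : ℕ) :
    Measurable fun v : Fin N → Ed d => ENNReal.ofReal (∏ i, gaussDensity d a (v i)) :=
  (ENNReal.continuous_ofReal.comp (continuous_finsetProd _ fun i _ =>
    (continuous_gaussDensity a).comp (continuous_apply i))).measurable

lemma gaussDensity_mul_exp_inner (a : ℝ) (ξ w : Ed d) :
    ((gaussDensity d a w * Real.exp ⟪ξ, w⟫ : ℝ) : ℂ)
      = (((2 * π * a ^ 2) ^ (-(d : ℝ) / 2) : ℝ) : ℂ) *
        Complex.exp (-((1 / (2 * a ^ 2) : ℝ) : ℂ) * (‖w‖ : ℂ) ^ 2 + 1 * ((⟪ξ, w⟫ : ℝ) : ℂ)) := by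
  rw [gaussDensity, mul_assoc, ← Real.exp_add]
  push_cast
  congr 2
  ring

lemma integrable_gaussDensity_mul_exp {a : ℝ} (ha : 0 < a) (ξ : Ed d) :
    Integrable fun w => gaussDensity d a w * Real.exp ⟪ξ, w⟫ := by
  have h := (GaussianFourier.integrable_cexp_neg_mul_sq_norm_add (V := Ed d)
    (b := ((1 / (2 * a ^ 2) : ℝ) : ℂ)) (by rw [Complex.ofReal_re]; positivity) 1 ξ).const_mul
    (((2 * π * a ^ 2) ^ (-(d : ℝ) / 2) : ℝ) : ℂ)
  simp_rw [← gaussDensity_mul_exp_inner] at h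
  exact h.re

lemma integral_gaussDensity_mul_exp {a : ℝ} (ha : 0 < a) (ξ : Ed d) :
    ∫ w, gaussDensity d a w * Real.exp ⟪ξ, w⟫ = Real.exp (a ^ 2 * ‖ξ‖ ^ 2 / 2) := by
  rw [← Complex.ofReal_inj, ← integral_complex_ofReal]
  simp_rw [gaussDensity_mul_exp_inner]
  rw [integral_const_mul, GaussianFourier.integral_cexp_neg_mul_sq_norm_add (V := Ed d)
    (b := ((1 / (2 * a ^ 2) : ℝ) : ℂ)) (by rw [Complex.ofReal_re]; positivity) 1 ξ, ← mul_assoc]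
  have hpow : ((π : ℂ) / ((1 / (2 * a ^ 2) : ℝ) : ℂ)) ^ ((Module.finrank ℝ (Ed d) : ℂ) / 2)
      = (((2 * π * a ^ 2) ^ ((d : ℝ) / 2) : ℝ) : ℂ) := by
    rw [Complex.ofReal_cpow (by positivity), finrank_euclideanSpace_fin]
    push_cast
    congr 1
    field_simp
  rw [hpow, ← Complex.ofReal_mul, ← Real.rpow_add (by positivity)]
  have hz : -(d : ℝ) / 2 + (d : ℝ) / 2 = 0 := by ring
  rw [hz, Real.rpow_zero]
  push_cast
  rw [one_mul]
  congr 1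
  have : (a : ℂ) ≠ 0 := by exact_mod_cast ha.ne'
  field_simp
  norm_num

/-- The exponential moments of linear functionals of the increments. -/
lemma lintegral_exp_gaussIncrements {a : ℝ} (ha : 0 < a) {N : ℕ} (ξ : Fin N → Ed d) :
    ∫⁻ v, ENNReal.ofReal (Real.exp (∑ i, ⟪ξ i, v i⟫)) ∂gaussIncrements d a N
      = ENNReal.ofReal (Real.exp (a ^ 2 * (∑ i, ‖ξ i‖ ^ 2) / 2)) := by
  have hprod : ∀ v : Fin N → Ed d,
      ENNReal.ofReal (∏ i, gaussDensity d a (v i)) * ENNReal.ofReal (Real.exp (∑ i, ⟪ξ i, v i⟫))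
        = ENNReal.ofReal (∏ i, gaussDensity d a (v i) * Real.exp ⟪ξ i, v i⟫) := by
    intro v
    rw [← ENNReal.ofReal_mul (Finset.prod_nonneg fun i _ => gaussDensity_nonneg a _),
      Real.exp_sum, Finset.prod_mul_distrib]
  have hmeas : Measurable fun v : Fin N → Ed d =>
      ENNReal.ofReal (Real.exp (∑ i, ⟪ξ i, v i⟫)) := by
    have : Continuous fun v : Fin N → Ed d => Real.exp (∑ i, ⟪ξ i, v i⟫) := by fun_prop
    exact this.measurable.ennreal_ofReal
  rw [gaussIncrements, lintegral_withDensity_eq_lintegral_mul _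
    (measurable_prod_gaussDensity a N) hmeas]
  simp only [Pi.mul_apply, hprod]
  rw [volume_pi, ← ofReal_integral_eq_lintegral_ofReal
    (Integrable.fintype_prod fun i => integrable_gaussDensity_mul_exp ha (ξ i))
    (ae_of_all _ fun v => Finset.prod_nonneg fun i _ =>
      mul_nonneg (gaussDensity_nonneg a _) (Real.exp_nonneg _)),
    integral_fintype_prod_eq_prod fun (i : Fin N) (w : Ed d) =>
      gaussDensity d a w * Real.exp ⟪ξ i, w⟫]
  simp_rw [integral_gaussDensity_mul_exp ha]
  rw [← Real.exp_sum, Finset.mul_sum, Finset.sum_div]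

lemma gaussIncrements_univ {a : ℝ} (ha : 0 < a) (N : ℕ) :
    gaussIncrements d a N univ = 1 := by
  have := lintegral_exp_gaussIncrements ha (fun _ : Fin N => (0 : Ed d))
  simpa using this

/-- Chernoff bound for a linear functional of the increments. -/
lemma gaussIncrements_tail_le {a : ℝ} (ha : 0 < a) {N : ℕ} (ξ : Fin N → Ed d) {s b : ℝ}
    (hs : 0 < s) (hb : 0 ≤ b) (hξ : a ^ 2 * ∑ i, ‖ξ i‖ ^ 2 ≤ s) :
    gaussIncrements d a N {v | b < ∑ i, ⟪ξ i, v i⟫}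
      ≤ ENNReal.ofReal (Real.exp (-(b ^ 2 / (2 * s)))) := by
  set r := b / s with hr
  have hr0 : 0 ≤ r := by positivity
  have hmeas : MeasurableSet {v : Fin N → Ed d | b < ∑ i, ⟪ξ i, v i⟫} :=
    (isOpen_lt continuous_const (by fun_prop)).measurableSet
  calc gaussIncrements d a N {v | b < ∑ i, ⟪ξ i, v i⟫}
      = ∫⁻ v, {v : Fin N → Ed d | b < ∑ i, ⟪ξ i, v i⟫}.indicator 1 v ∂gaussIncrements d a N :=
        (lintegral_indicator_one hmeas).symm
    _ ≤ ∫⁻ v, ENNReal.ofReal (Real.exp (-(r * b))) *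
          ENNReal.ofReal (Real.exp (∑ i, ⟪r • ξ i, v i⟫)) ∂gaussIncrements d a N := by
        refine lintegral_mono (indicator_le' (fun v hv => ?_) fun _ _ => zero_le)
        rw [← ENNReal.ofReal_mul (Real.exp_nonneg _), ← Real.exp_add, Pi.one_apply,
          ENNReal.one_le_ofReal, Real.one_le_exp_iff]
        simp_rw [real_inner_smul_left]
        rw [← Finset.mul_sum]
        have := mul_le_mul_of_nonneg_left (le_of_lt hv) hr0
        linarith
    _ = ENNReal.ofReal (Real.exp (-(r * b) + a ^ 2 * (∑ i, ‖r • ξ i‖ ^ 2) / 2)) := by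
        rw [lintegral_const_mul' _ _ ENNReal.ofReal_ne_top, lintegral_exp_gaussIncrements ha,
          ← ENNReal.ofReal_mul (Real.exp_nonneg _), ← Real.exp_add]
    _ ≤ ENNReal.ofReal (Real.exp (-(b ^ 2 / (2 * s)))) := by
        refine ENNReal.ofReal_le_ofReal (Real.exp_le_exp.2 ?_)
        simp_rw [norm_smul, mul_pow, ← Finset.mul_sum, Real.norm_eq_abs, sq_abs]
        have h1 := mul_le_mul_of_nonneg_left hξ (sq_nonneg r)
        have h2 : r ^ 2 * s = r * b := by
          rw [hr]
          field_simp
        have h3 : b ^ 2 / (2 * s) = r * b / 2 := by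
          rw [hr]
          field_simp
        rw [h3]
        linarith

end Increments

section Paths

variable {d : ℕ}

lemma continuous_pwLin1 (x : Ed d) (N : ℕ) : Continuous (pwLin1 x N) := by
  refine Continuous.subtype_mk (ContinuousMap.continuous_of_continuous_uncurry _ ?_) _
  refine continuous_const.add (continuous_finsetSum _ fun i _ => ?_)
  exact (clamp01_continuous.comp (by fun_prop)).smul (by fun_prop)

lemma WxaN_apply (x : Ed d) (a : ℝ) (N : ℕ) {S : Set (ℝ × Omega1 x)} (hS : MeasurableSet S) :
    WxaN x a N S = gaussIncrements d a N {v | ((a ^ 2 * N : ℝ), pwLin1 x N v) ∈ S} := by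
  have hpath : Measurable fun v : Fin N → Ed d => ((a ^ 2 * N : ℝ), pwLin1 x N v) :=
    measurable_const.prodMk (continuous_pwLin1 x N).measurable
  have hA : MeasurableSet {v : Fin N → Ed d | ((a ^ 2 * N : ℝ), pwLin1 x N v) ∈ S} := hpath hS
  have hcomp : Measurable fun xs : Fin N → Ed d =>
      ((a ^ 2 * N : ℝ), pwLin1 x N (pathIncrements x xs)) :=
    hpath.comp (measurable_pathIncrements x N)
  change Measure.map (fun xs => ((a ^ 2 * N : ℝ), pwLin1 x N (pathIncrements x xs)))
    (volume.withDensity fun xs : Fin N → Ed d =>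
      ENNReal.ofReal (∏ i, gaussDensity d a (pathIncrements x xs i))) S = _
  rw [Measure.map_apply hcomp hS, withDensity_apply _ (hcomp hS),
    gaussIncrements, withDensity_apply _ hA, ← lintegral_indicator (hcomp hS),
    ← lintegral_indicator hA, ← lintegral_pathIncrements x
      ((measurable_prod_gaussDensity a N).indicator hA)]
  rfl

lemma sum_clamp01 (N : ℕ) {r : ℝ} (hr : 0 ≤ r) :
    ∑ i ∈ Finset.range N, clamp01 (r - i) = min (N : ℝ) r := by
  induction N with
  | zero => simp [hr]
  | succ N ih =>
    rw [Finset.sum_range_succ, ih]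
    push_cast
    rcases le_total r N with h | h
    · rw [clamp01_of_nonpos (by linarith), min_eq_right h, min_eq_right (by linarith), add_zero]
    · rcases le_total (N + 1 : ℝ) r with h' | h'
      · rw [clamp01_of_one_le (by linarith), min_eq_left h, min_eq_left h']
      · rw [min_eq_left h, min_eq_right h', clamp01, max_eq_right (by linarith),
          min_eq_right (by linarith)]
        ring

lemma clamp01_mono : Monotone clamp01 := fun _ _ h =>
  min_le_min le_rfl (max_le_max le_rfl h)

lemma clamp01_mem_Icc (r : ℝ) : clamp01 r ∈ Icc (0 : ℝ) 1 :=
  ⟨le_min zero_le_one (le_max_left _ _), min_le_left _ _⟩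

lemma sum_clamp01_sub_sq_le (N : ℕ) {s t : ℝ} (hs : 0 ≤ s) (hst : s ≤ t) (ht : t ≤ 1) :
    ∑ i : Fin N, (clamp01 (N * t - (i : ℕ)) - clamp01 (N * s - (i : ℕ))) ^ 2
      ≤ N * (t - s) := by
  have hsum : ∀ r : ℝ, 0 ≤ r → r ≤ 1 → ∑ i : Fin N, clamp01 (N * r - (i : ℕ)) = N * r := by
    intro r hr hr1
    rw [Fin.sum_univ_eq_sum_range (fun i : ℕ => clamp01 (N * r - i)),
      sum_clamp01 N (by positivity), min_eq_right]
    exact mul_le_of_le_one_right (Nat.cast_nonneg _) hr1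
  refine le_of_le_of_eq (Finset.sum_le_sum fun i _ => ?_) ((Finset.sum_sub_distrib
    (fun i : Fin N => clamp01 (N * t - (i : ℕ))) fun i => clamp01 (N * s - (i : ℕ))).trans (by
      rw [hsum t (hs.trans hst) ht, hsum s hs (hst.trans ht), mul_sub]))
  have h0 : clamp01 (N * s - (i : ℕ)) ≤ clamp01 (N * t - (i : ℕ)) := clamp01_mono (by gcongr)
  have h1 := (clamp01_mem_Icc (N * s - (i : ℕ))).1
  have h2 := (clamp01_mem_Icc (N * t - (i : ℕ))).2
  nlinarith

lemma evalAt_pwLinE_sub (x : Ed d) (N : ℕ) (v : Fin N → Ed d) {s t : ℝ} (hs : s ∈ Icc (0 : ℝ) 1)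
    (ht : t ∈ Icc (0 : ℝ) 1) :
    evalAt (pwLinE x N v) t - evalAt (pwLinE x N v) s
      = ∑ i : Fin N, (clamp01 (N * t - (i : ℕ)) - clamp01 (N * s - (i : ℕ))) • v i := by
  rw [evalAt, evalAt, projIcc_of_mem _ hs, projIcc_of_mem _ ht]
  simp only [pwLinE, ContinuousMap.coe_mk, sub_smul, Finset.sum_sub_distrib]
  abel

/-- Gaussian tail of an increment of the path in a unit direction. -/
lemma gaussIncrements_inner_evalAt_le {a T : ℝ} (ha : 0 < a) {N : ℕ} (hT : 0 < T)
    (hN : a ^ 2 * N ≤ T) (x u : Ed d) (hu : ‖u‖ = 1) {s t b : ℝ} (hs : 0 ≤ s) (hst : s < t)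
    (ht : t ≤ 1) (hb : 0 ≤ b) :
    gaussIncrements d a N
        {v | b < ⟪u, evalAt (pwLinE x N v) t - evalAt (pwLinE x N v) s⟫}
      ≤ ENNReal.ofReal (Real.exp (-(b ^ 2 / (2 * (T * (t - s)))))) := by
  have h := gaussIncrements_tail_le ha
    (fun i : Fin N => (clamp01 (N * t - (i : ℕ)) - clamp01 (N * s - (i : ℕ))) • u)
    (mul_pos hT (sub_pos.2 hst)) hb (by
      simp_rw [norm_smul, mul_pow, hu, one_pow, mul_one, Real.norm_eq_abs, sq_abs]
      calc _ ≤ a ^ 2 * (N * (t - s)) := by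
            gcongr
            exact sum_clamp01_sub_sq_le N hs hst.le ht
        _ ≤ T * (t - s) := by
            rw [← mul_assoc]
            exact mul_le_mul_of_nonneg_right hN (sub_nonneg.2 hst.le))
  refine le_trans (measure_mono fun v hv => ?_) h
  rw [mem_ofPred_eq, evalAt_pwLinE_sub x N v ⟨hs, hst.le.trans ht⟩ ⟨hs.trans hst.le, ht⟩,
    inner_sum] at hv
  simpa only [mem_ofPred_eq, real_inner_smul_left, real_inner_smul_right] using hv

lemma exists_lt_abs_coord {b : ℝ} (hb : 0 ≤ b) {w : Ed d} (hw : d * b < ‖w‖) :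
    ∃ j, b < |w j| := by
  by_contra! hcon
  refine hw.not_ge ?_
  rw [EuclideanSpace.norm_eq, Real.sqrt_le_iff]
  refine ⟨by positivity, ?_⟩
  calc ∑ j, ‖w j‖ ^ 2 ≤ ∑ _j : Fin d, b ^ 2 := by
        refine Finset.sum_le_sum fun j _ => ?_
        rw [Real.norm_eq_abs]
        exact pow_le_pow_left₀ (abs_nonneg _) (hcon j) 2
    _ = d * b ^ 2 := by simp
    _ ≤ (d * b) ^ 2 := by
        rw [mul_pow]
        gcongr
        exact_mod_cast Nat.le_self_pow two_ne_zero d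

/-- Gaussian tail of an increment of the path. -/
lemma gaussIncrements_dist_evalAt_le {a T : ℝ} (ha : 0 < a) {N : ℕ} (hT : 0 < T)
    (hN : a ^ 2 * N ≤ T) (x : Ed d) {s t b : ℝ} (hs : 0 ≤ s) (hst : s < t)
    (ht : t ≤ 1) (hb : 0 ≤ b) :
    gaussIncrements d a N
        {v | d * b < dist (evalAt (pwLinE x N v) s) (evalAt (pwLinE x N v) t)}
      ≤ ENNReal.ofReal (2 * d * Real.exp (-(b ^ 2 / (2 * (T * (t - s)))))) := by
  let A : Ed d → Set (Fin N → Ed d) := fun u =>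
    {v | b < ⟪u, evalAt (pwLinE x N v) t - evalAt (pwLinE x N v) s⟫}
  let e : Fin d → Ed d := fun j => EuclideanSpace.single j 1
  have hsub : {v | d * b < dist (evalAt (pwLinE x N v) s) (evalAt (pwLinE x N v) t)}
      ⊆ ⋃ j, (A (e j) ∪ A (-e j)) := by
    intro v hv
    rw [mem_ofPred_eq, dist_comm, dist_eq_norm] at hv
    obtain ⟨j, hj⟩ := exists_lt_abs_coord hb hv
    rw [mem_iUnion]
    refine ⟨j, ?_⟩
    rcases lt_abs.1 hj with h | h
    · left
      simpa [A, e, EuclideanSpace.inner_single_left] using h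
    · right
      simpa [A, e, EuclideanSpace.inner_single_left, inner_neg_left] using h
  have he : ∀ j, ‖e j‖ = 1 := fun j => by simp [e]
  set q := Real.exp (-(b ^ 2 / (2 * (T * (t - s))))) with hq
  have hq0 : 0 ≤ q := Real.exp_nonneg _
  calc _ ≤ gaussIncrements d a N (⋃ j, (A (e j) ∪ A (-e j))) := measure_mono hsub
    _ ≤ ∑ j, gaussIncrements d a N (A (e j) ∪ A (-e j)) := measure_iUnion_fintype_le _ _
    _ ≤ ∑ _j : Fin d, ENNReal.ofReal (q + q) := by
        refine Finset.sum_le_sum fun j _ => (measure_union_le _ _).trans ?_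
        rw [ENNReal.ofReal_add hq0 hq0]
        exact add_le_add
          (gaussIncrements_inner_evalAt_le ha hT hN x _ (he j) hs hst ht hb)
          (gaussIncrements_inner_evalAt_le ha hT hN x _ (by rw [norm_neg, he j]) hs hst ht hb)
    _ = ENNReal.ofReal (2 * d * q) := by
        rw [Finset.sum_const, Finset.card_univ, Fintype.card_fin, ← ENNReal.ofReal_nsmul]
        congr 1
        rw [nsmul_eq_mul]
        ring

end Paths

section Tightness

variable {d : ℕ}

lemma exp_neg_le_two_div_sq {y : ℝ} (hy : 0 < y) : Real.exp (-y) ≤ 2 / y ^ 2 := by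
  have h := Real.quadratic_le_exp_of_nonneg hy.le
  rw [Real.exp_neg, le_div_iff₀ (by positivity), inv_mul_le_iff₀ (Real.exp_pos y)]
  linarith

/-- Up to a small probability, the dyadic increments of the path decay geometrically. -/
lemma gaussIncrements_notMem_dyadicPaths_le {a T c : ℝ} (ha : 0 < a) {N : ℕ} (hT : 0 < T)
    (hc : 0 < c) (hN : a ^ 2 * N ≤ T) (x : Ed d) :
    gaussIncrements d a N
        {v | pwLin1 x N v ∉ dyadicPaths x fun n => d * (√(2 * T * c) * (8 / 9) ^ n)}
      ≤ ENNReal.ofReal (24 * d / c ^ 2) := by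
  set β : ℕ → ℝ := fun n => √(2 * T * c) * (8 / 9) ^ n with hβ
  have hβ0 : ∀ n, 0 ≤ β n := fun n => by positivity
  let A : ℕ → ℕ → Set (Fin N → Ed d) := fun n k =>
    {v | d * β n < dist (evalAt (pwLinE x N v) ((k : ℝ) / 2 ^ n))
      (evalAt (pwLinE x N v) (((k : ℝ) + 1) / 2 ^ n))}
  have hsub : {v | pwLin1 x N v ∉ dyadicPaths x fun n => d * β n}
      ⊆ ⋃ n, ⋃ k ∈ Finset.range (2 ^ n), A n k := by
    intro v hv
    simp only [dyadicPaths, mem_ofPred_eq, not_forall, not_le] at hv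
    obtain ⟨n, k, hnk⟩ := hv
    simp only [mem_iUnion]
    refine ⟨n, k, Finset.mem_range.2 ?_, hnk⟩
    by_contra! hk
    have hk' : (2 : ℝ) ^ n ≤ k := by exact_mod_cast hk
    have h1 : (1 : ℝ) ≤ (k : ℝ) / 2 ^ n := (one_le_div (by positivity)).2 hk'
    have h2 : (1 : ℝ) ≤ ((k : ℝ) + 1) / 2 ^ n := (one_le_div (by positivity)).2 (by linarith)
    rw [evalAt, evalAt, projIcc_of_right_le _ h1, projIcc_of_right_le _ h2, dist_self] at hnk
    exact hnk.not_ge (mul_nonneg (Nat.cast_nonneg _) (hβ0 n))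
  have hA : ∀ n, ∀ k ∈ Finset.range (2 ^ n), gaussIncrements d a N (A n k)
      ≤ ENNReal.ofReal (2 * d * Real.exp (-(c * (128 / 81) ^ n))) := by
    intro n k hk
    have hk' : (k : ℝ) + 1 ≤ 2 ^ n := by exact_mod_cast Finset.mem_range.1 hk
    have hlt : (k : ℝ) / 2 ^ n < ((k : ℝ) + 1) / 2 ^ n := by
      gcongr
      linarith
    refine (gaussIncrements_dist_evalAt_le ha hT hN x (by positivity) hlt
      ((div_le_one (by positivity)).2 hk') (hβ0 n)).trans_eq ?_
    congr 4
    rw [← sub_div, add_sub_cancel_left, hβ, mul_pow, Real.sq_sqrt (by positivity),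
      show (128 / 81 : ℝ) = 2 * (8 / 9) ^ 2 by norm_num, mul_pow, ← pow_mul, ← pow_mul, mul_comm n 2]
    field_simp
  have hterm : ∀ n : ℕ, ∑ k ∈ Finset.range (2 ^ n), gaussIncrements d a N (A n k)
      ≤ ENNReal.ofReal (4 * d / c ^ 2 * (6561 / 8192) ^ n) := by
    intro n
    refine (Finset.sum_le_card_nsmul _ _ _ (hA n)).trans ?_
    rw [Finset.card_range, ← ENNReal.ofReal_nsmul, nsmul_eq_mul]
    refine ENNReal.ofReal_le_ofReal ?_
    push_cast
    calc (2 : ℝ) ^ n * (2 * d * Real.exp (-(c * (128 / 81) ^ n)))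
        ≤ (2 : ℝ) ^ n * (2 * d * (2 / (c * (128 / 81) ^ n) ^ 2)) := by
          gcongr
          exact exp_neg_le_two_div_sq (by positivity)
      _ = 4 * d / c ^ 2 * (6561 / 8192) ^ n := by
          rw [show (6561 / 8192 : ℝ) = 2 / (128 / 81) ^ 2 by norm_num, div_pow 2, ← pow_mul,
            mul_pow, ← pow_mul, mul_comm n 2]
          field_simp
          ring
  have hgeom : HasSum (fun n : ℕ => 4 * d / c ^ 2 * (6561 / 8192 : ℝ) ^ n)
      (4 * d / c ^ 2 * (1 - 6561 / 8192)⁻¹) :=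
    (hasSum_geometric_of_lt_one (by norm_num) (by norm_num)).mul_left _
  calc _ ≤ gaussIncrements d a N (⋃ n, ⋃ k ∈ Finset.range (2 ^ n), A n k) := measure_mono hsub
    _ ≤ ∑' n, gaussIncrements d a N (⋃ k ∈ Finset.range (2 ^ n), A n k) := measure_iUnion_le _
    _ ≤ ∑' n : ℕ, ENNReal.ofReal (4 * d / c ^ 2 * (6561 / 8192) ^ n) :=
        ENNReal.tsum_le_tsum fun n => (measure_biUnion_finset_le _ _).trans (hterm n)
    _ = ENNReal.ofReal (4 * d / c ^ 2 * (1 - 6561 / 8192)⁻¹) := by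
        rw [← ENNReal.ofReal_tsum_of_nonneg (fun n => by positivity) hgeom.summable,
          hgeom.tsum_eq]
    _ ≤ ENNReal.ofReal (24 * d / c ^ 2) := by
        refine ENNReal.ofReal_le_ofReal ?_
        have h : 0 ≤ (d : ℝ) / c ^ 2 := by positivity
        have h1 : 4 * (d : ℝ) / c ^ 2 = 4 * (d / c ^ 2) := by ring
        have h2 : 24 * (d : ℝ) / c ^ 2 = 24 * (d / c ^ 2) := by ring
        rw [h1, h2]
        norm_num
        linarith

/-- A bound on `W_{x,a}` from bounds on the `W_{x,a,N}` with `a² N ≤ T`. -/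
lemma Wxa_le_of_WxaN_le {m a T ε : ℝ} (hm : 0 < m) (ha : 0 < a) (hε : 0 ≤ ε) (x : Ed d)
    {S : Set (ℝ × Omega1 x)} (hS : MeasurableSet S)
    (h : ∀ N : ℕ, a ^ 2 * N ≤ T → WxaN x a N S ≤ ENNReal.ofReal ε) :
    Wxa x m a S ≤ ENNReal.ofReal (ε + 2 * Real.exp (-(m ^ 2 * T / 4))) := by
  set p := Real.exp (-(m ^ 2 * a ^ 2 / 4)) with hp
  set δ := Real.exp (-(m ^ 2 * T / 4)) with hδ
  have hp0 : 0 < p := Real.exp_pos _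
  have hδ0 : 0 < δ := Real.exp_pos _
  have hp1 : p < 1 := by
    rw [hp, Real.exp_lt_one_iff, neg_lt_zero]
    positivity
  have hp21 : p ^ 2 < 1 := pow_lt_one₀ hp0.le hp1 two_ne_zero
  have hexp : Real.exp (-m ^ 2 * a ^ 2 / 2) = p ^ 2 := by
    rw [hp, ← Real.exp_nat_mul]
    congr 1
    push_cast
    ring
  have hexpN : ∀ N : ℕ, Real.exp (-m ^ 2 * a ^ 2 * N / 2) = (p ^ 2) ^ N := by
    intro N
    rw [← hexp, ← Real.exp_nat_mul]
    congr 1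
    ring
  have hterm : ∀ N : ℕ, ENNReal.ofReal ((p ^ 2) ^ N) * WxaN x a N S
      ≤ ENNReal.ofReal (ε * (p ^ 2) ^ N + δ * p ^ N) := by
    intro N
    rcases le_or_gt (a ^ 2 * N) T with hN | hN
    · calc _ ≤ ENNReal.ofReal ((p ^ 2) ^ N) * ENNReal.ofReal ε := by
            gcongr
            exact h N hN
        _ = ENNReal.ofReal (ε * (p ^ 2) ^ N) := by
            rw [← ENNReal.ofReal_mul (by positivity), mul_comm]
        _ ≤ _ := ENNReal.ofReal_le_ofReal (le_add_of_nonneg_right (by positivity))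
    · have hle : WxaN x a N S ≤ 1 := by
        rw [WxaN_apply x a N hS, ← gaussIncrements_univ ha N]
        exact measure_mono (subset_univ _)
      have hpN : p ^ N ≤ δ := by
        rw [hp, hδ, ← Real.exp_nat_mul, Real.exp_le_exp]
        have := mul_le_mul_of_nonneg_left hN.le (sq_nonneg m)
        linarith
      calc _ ≤ ENNReal.ofReal ((p ^ 2) ^ N) * 1 := by gcongr
        _ ≤ ENNReal.ofReal (δ * p ^ N) := by
            rw [mul_one, ← pow_mul, mul_comm 2 N, pow_mul, sq]
            exact ENNReal.ofReal_le_ofReal (by gcongr)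
        _ ≤ _ := ENNReal.ofReal_le_ofReal (le_add_of_nonneg_left (by positivity))
  have hsum : HasSum (fun N : ℕ => ε * (p ^ 2) ^ N + δ * p ^ N)
      (ε * (1 - p ^ 2)⁻¹ + δ * (1 - p)⁻¹) :=
    ((hasSum_geometric_of_lt_one (sq_nonneg p) hp21).mul_left ε).add
      ((hasSum_geometric_of_lt_one hp0.le hp1).mul_left δ)
  calc Wxa x m a S
      = ENNReal.ofReal (1 - p ^ 2) * ∑' N : ℕ, ENNReal.ofReal ((p ^ 2) ^ N) * WxaN x a N S := by
        simp only [Wxa, Measure.smul_apply, Measure.sum_apply _ hS, smul_eq_mul, hexp, hexpN]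
    _ ≤ ENNReal.ofReal (1 - p ^ 2) *
          ∑' N : ℕ, ENNReal.ofReal (ε * (p ^ 2) ^ N + δ * p ^ N) := by
        gcongr with N
        exact hterm N
    _ = ENNReal.ofReal (ε + (1 + p) * δ) := by
        rw [← ENNReal.ofReal_tsum_of_nonneg (fun N => by positivity) hsum.summable,
          hsum.tsum_eq, ← ENNReal.ofReal_mul (by linarith)]
        congr 1
        have h1 : 1 - p ≠ 0 := by linarith
        have h2 : 1 + p ≠ 0 := by linarith
        rw [show 1 - p ^ 2 = (1 - p) * (1 + p) by ring]
        field_simp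
    _ ≤ _ := by
        refine ENNReal.ofReal_le_ofReal ?_
        gcongr
        linarith

end Tightness

/-- **Lemma 4.1**: the family `{W_{x,a} : 0 < a < 1}` of probability measures on
`Γ̃(x) = [0,∞) × Ω(x)` is tight. -/
theorem Wxa_tight (d : ℕ) (hd : 1 ≤ d) (m : ℝ) (hm : 0 < m) (x : Ed d) :
    ∀ η : ℝ, 0 < η → ∃ K : Set (ℝ × Omega1 x), IsCompact K ∧
      ∀ a : ℝ, 0 < a → a < 1 → Wxa x m a Kᶜ < ENNReal.ofReal η := by
  intro η hη
  set T : ℝ := 4 * (8 / η) / m ^ 2 with hTdef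
  set c : ℝ := 1 + 96 * d / η with hcdef
  have hT : 0 < T := by positivity
  have hc1 : 1 ≤ c := le_add_of_nonneg_right (by positivity)
  have hc : 0 < c := by linarith
  set b : ℕ → ℝ := fun n => d * (√(2 * T * c) * (8 / 9) ^ n) with hb
  have hbsum : Summable b :=
    ((summable_geometric_of_lt_one (by norm_num) (by norm_num)).mul_left _).mul_left _
  have hb0 : ∀ n, 0 ≤ b n := fun n => by positivity
  refine ⟨Icc 0 T ×ˢ dyadicPaths x b, isCompact_Icc.prod (isCompact_dyadicPaths x hbsum hb0),
    fun a ha _ => ?_⟩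
  have hmeas : MeasurableSet (Icc 0 T ×ˢ dyadicPaths x b)ᶜ :=
    (measurableSet_Icc.prod (isClosed_dyadicPaths x b).measurableSet).compl
  refine (Wxa_le_of_WxaN_le (T := T) (ε := 24 * d / c ^ 2) hm ha (by positivity) x hmeas
    fun N hN => ?_).trans_lt ?_
  · rw [WxaN_apply x a N hmeas]
    refine le_trans (measure_mono fun v hv hmem => hv ⟨⟨by positivity, hN⟩, hmem⟩)
      (gaussIncrements_notMem_dyadicPaths_le ha hT hc hN x)
  · rw [ENNReal.ofReal_lt_ofReal_iff hη]
    have hexp : Real.exp (-(m ^ 2 * T / 4)) < η / 8 := by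
      have hTm : m ^ 2 * T / 4 = 8 / η := by
        rw [hTdef]
        field_simp
      have h1 : 8 / η < Real.exp (8 / η) := by linarith [Real.add_one_le_exp (8 / η)]
      rw [hTm, Real.exp_neg, ← inv_div 8 η]
      exact inv_strictAnti₀ (by positivity) h1
    have hε : 24 * d / c ^ 2 ≤ η / 4 := by
      have h1 : 96 * d / η ≤ c := by linarith
      have h2 : c ≤ c ^ 2 := by nlinarith
      rw [div_le_iff₀ hη] at h1
      rw [div_le_iff₀ (by positivity)]
      nlinarith
    linarith

end
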